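/- Let k be a field, g a Lie algebra over k, and (λ, D) a twisted derivation of g. Then the bracket on g × k defined by [(g,a),(h,b)] := ([g,h] + a·D(h) − b·D(g), a·λ(h) − b·λ(g)) is a Lie algebra bracket; the resulting Lie algebra is denoted g ⋈_{(λ,D)} k and contains g ≅ g × {0} as a Lie subalgebra. -/

import Mathlib

def IsLieBracket {L : Type*} [AddCommGroup L] (B : L → L → L) : Prop :=
  (∀ p, B p p = 0) ∧ ∀ p q r, B p (B q r) + B q (B r p) + B r (B p q) = 0

/-- The bracket of `G ⋈_{(λ,D)} k` on `G × k`: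
`[(g,a),(h,b)] = ([g,h] + a·D(h) - b·D(g), a·λ(h) - b·λ(g))`. -/
def twDerBracket {k G : Type*} [Field k] [LieRing G] [LieAlgebra k G]
    (lam : G →ₗ[k] k) (D : G →ₗ[k] G) : G × k → G × k → G × k :=
  fun u w =>
    (⁅u.1, w.1⁆ + u.2 • D w.1 - w.2 • D u.1, u.2 * lam w.1 - w.2 * lam u.1)

/-- Proposition 4.4: for a twisted derivation `(λ, D)` of `G`, the bracket of
`G ⋈_{(λ,D)} k` is a Lie algebra bracket, and `G ≅ G × {0}` is a Lie subalgebra. -/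
theorem twDerBracket_isLieBracket {k G : Type*} [Field k] [LieRing G] [LieAlgebra k G]
    (lam : G →ₗ[k] k) (D : G →ₗ[k] G)
    (hlam : ∀ g h : G, lam ⁅g, h⁆ = 0)
    (hD : ∀ g h : G, D ⁅g, h⁆ = ⁅D g, h⁆ + ⁅g, D h⁆ + lam g • D h - lam h • D g) :
    IsLieBracket (twDerBracket lam D) ∧
    (∀ g h : G, twDerBracket lam D (g, 0) (h, 0) = (⁅g, h⁆, 0)) ∧
    Function.Injective (fun g : G => ((g, 0) : G × k)) := by
  refine ⟨⟨?_, ?_⟩, ?_, ?_⟩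
  · rintro ⟨g, a⟩
    simp [twDerBracket]
  · rintro ⟨g, a⟩ ⟨h, b⟩ ⟨l, c⟩
    have J := lie_jacobi g h l
    have e1 : ⁅D h, l⁆ = -⁅l, D h⁆ := (lie_skew _ _).symm
    have e2 : ⁅D l, g⁆ = -⁅g, D l⁆ := (lie_skew _ _).symm
    have e3 : ⁅D g, h⁆ = -⁅h, D g⁆ := (lie_skew _ _).symm
    refine Prod.ext ?_ ?_
    · simp only [twDerBracket, Prod.fst_add, Prod.fst_zero, map_add, map_sub, map_smul, lie_add,
        lie_sub, lie_smul, hD, e1, e2, e3]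
      rw [← J]
      module
    · simp only [twDerBracket, Prod.snd_add, Prod.snd_zero, map_add, map_sub, map_smul, hlam,
        smul_eq_mul]
      ring
  · intro g h
    simp [twDerBracket]
  · intro g h e
    exact congrArg Prod.fst e
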